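/- arXiv:1602.02164 — 4 statements merged into one kernel-verified Lean document; each statement's English description precedes it below -/
import Mathlib

section
/- Under the VLS setup, suppose 0 < b < 1, b ≤ α_i ≤ 1/b and b ≤ β_j ≤ 1/b for all i, j ∈ [n], and the initialization satisfies b ≤ x_{i,0} ≤ 1/b and b ≤ y_{j,0} ≤ 1/b for all i, j. Then for all t ≥ 0 and all i, j: b² ≤ x_{i,t}/α_i ≤ 1/b², b² ≤ y_{j,t}/β_j ≤ 1/b², and consequently b³ ≤ x_{i,t} ≤ 1/b³ and b³ ≤ y_{j,t} ≤ 1/b³. -/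
/-!
In the ratio coordinates `u j = y j / β j`, the row update reads
`x i / α i = (∑ β j ^ 2 * u j) / (∑ β j ^ 2 * u j ^ 2)`. If every `u j` lies in `[m, 1/m]` with
`m > 0`, then `m * u j ^ 2 ≤ u j` and `m * u j ≤ u j ^ 2`, so the new ratio lies in `[m, 1/m]` as
well; the column update is symmetric. Hence the interval `[b², 1/b²]`, which contains the initial
ratios, is preserved for all times (`ratio_step`). Multiplying by `α i` or `β j`, which lie in
`[b, 1/b]`, bounds the iterates themselves (`ratio_bounds`).
-/

/-- One least-squares update preserves the ratio interval `[m, 1/m]`. The condition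
`m ≤ y / β ≤ 1/m` is written without division as `m * β ≤ y` and `m * y ≤ β`. -/
theorem ratio_step {ι : Type*} (s : Finset ι) (hs : s.Nonempty) (m a : ℝ) (hm : 0 < m)
    (ha : 0 < a) (β y : ι → ℝ) (hβ : ∀ j, 0 < β j)
    (h : ∀ j, m * β j ≤ y j ∧ m * y j ≤ β j) :
    m * a ≤ (∑ j ∈ s, (a * β j) * y j) / (∑ j ∈ s, (y j) ^ 2) ∧
      m * ((∑ j ∈ s, (a * β j) * y j) / (∑ j ∈ s, (y j) ^ 2)) ≤ a := by
  have hy : ∀ j, 0 < y j := fun j => (mul_pos hm (hβ j)).trans_le (h j).1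
  have hpos : 0 < ∑ j ∈ s, (y j) ^ 2 := Finset.sum_pos (fun j _ => pow_pos (hy j) 2) hs
  constructor
  · rw [le_div_iff₀ hpos, Finset.mul_sum]
    refine Finset.sum_le_sum fun j _ => ?_
    have := mul_le_mul_of_nonneg_left (h j).2 (mul_pos ha (hy j)).le
    linarith
  · rw [← mul_div_assoc, div_le_iff₀ hpos, Finset.mul_sum, Finset.mul_sum]
    refine Finset.sum_le_sum fun j _ => ?_
    have := mul_le_mul_of_nonneg_left (h j).1 (mul_pos ha (hy j)).le
    linarith

/-- The initial ratios lie in `[b², 1/b²]`, in division-free form. -/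
theorem ratio_init {b a v : ℝ} (hb0 : 0 < b) (ha : b ≤ a ∧ a ≤ 1 / b)
    (hv : b ≤ v ∧ v ≤ 1 / b) : b ^ 2 * a ≤ v ∧ b ^ 2 * v ≤ a := by
  obtain ⟨ha1, ha2⟩ := ha
  obtain ⟨hv1, hv2⟩ := hv
  rw [le_div_iff₀ hb0] at ha2 hv2
  constructor <;> nlinarith

/-- The division-free ratio bounds give the stated bounds on `v / a` and on `v`. -/
theorem ratio_bounds {b a v : ℝ} (hb0 : 0 < b) (ha : b ≤ a ∧ a ≤ 1 / b)
    (h : b ^ 2 * a ≤ v ∧ b ^ 2 * v ≤ a) :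
    (b ^ 2 ≤ v / a ∧ v / a ≤ 1 / b ^ 2) ∧ (b ^ 3 ≤ v ∧ v ≤ 1 / b ^ 3) := by
  obtain ⟨ha1, ha2⟩ := ha
  obtain ⟨h1, h2⟩ := h
  have ha0 : 0 < a := hb0.trans_le ha1
  have hb2 : 0 < b ^ 2 := pow_pos hb0 2
  rw [le_div_iff₀ hb0] at ha2
  refine ⟨⟨(le_div_iff₀ ha0).2 h1, ?_⟩, ?_, ?_⟩
  · rw [div_le_div_iff₀ ha0 hb2]
    linarith
  · have := mul_le_mul_of_nonneg_left ha1 hb2.le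
    linarith [pow_succ b 2]
  · rw [le_div_iff₀ (pow_pos hb0 3)]
    have := mul_le_mul_of_nonneg_left h2 hb0.le
    linarith [show v * b ^ 3 = b * (b ^ 2 * v) by ring]

/-- Under the VLS setup, if `b ≤ α, β ≤ 1/b` and the initialization satisfies
`b ≤ x₀, y₀ ≤ 1/b`, then for all times `t` the ratios `x t i / α i` and `y t j / β j`
lie in `[b², 1/b²]`, and consequently `x t i, y t j ∈ [b³, 1/b³]`. -/
theorem stmt_2 (n : ℕ) (hn : 1 ≤ n) (Adj : Fin n → Fin n → Prop) [DecidableRel Adj]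
    (hrowdeg : ∀ i : Fin n, (Finset.univ.filter fun j => Adj i j).Nonempty)
    (hcoldeg : ∀ j : Fin n, (Finset.univ.filter fun i => Adj i j).Nonempty)
    (b : ℝ) (hb0 : 0 < b) (hb1 : b < 1)
    (α β : Fin n → ℝ)
    (hαb : ∀ i, b ≤ α i ∧ α i ≤ 1 / b) (hβb : ∀ j, b ≤ β j ∧ β j ≤ 1 / b)
    (x y : ℕ → Fin n → ℝ)
    (hx0 : ∀ i, b ≤ x 0 i ∧ x 0 i ≤ 1 / b) (hy0 : ∀ j, b ≤ y 0 j ∧ y 0 j ≤ 1 / b)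
    (hxrec : ∀ t : ℕ, ∀ i : Fin n,
      x (t + 1) i =
        (∑ j ∈ Finset.univ.filter fun j => Adj i j, (α i * β j) * y t j) /
          (∑ j ∈ Finset.univ.filter fun j => Adj i j, (y t j) ^ 2))
    (hyrec : ∀ t : ℕ, ∀ j : Fin n,
      y (t + 1) j =
        (∑ i ∈ Finset.univ.filter fun i => Adj i j, (α i * β j) * x (t + 1) i) /
          (∑ i ∈ Finset.univ.filter fun i => Adj i j, (x (t + 1) i) ^ 2)) :
    (∀ t : ℕ, ∀ i : Fin n, b ^ 2 ≤ x t i / α i ∧ x t i / α i ≤ 1 / b ^ 2) ∧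
    (∀ t : ℕ, ∀ j : Fin n, b ^ 2 ≤ y t j / β j ∧ y t j / β j ≤ 1 / b ^ 2) ∧
    (∀ t : ℕ, ∀ i : Fin n, b ^ 3 ≤ x t i ∧ x t i ≤ 1 / b ^ 3) ∧
    (∀ t : ℕ, ∀ j : Fin n, b ^ 3 ≤ y t j ∧ y t j ≤ 1 / b ^ 3) := by
  have hα : ∀ i, 0 < α i := fun i => hb0.trans_le (hαb i).1
  have hβ : ∀ j, 0 < β j := fun j => hb0.trans_le (hβb j).1
  have hb2 : 0 < b ^ 2 := pow_pos hb0 2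
  have key : ∀ t : ℕ, (∀ i, b ^ 2 * α i ≤ x t i ∧ b ^ 2 * x t i ≤ α i) ∧
      (∀ j, b ^ 2 * β j ≤ y t j ∧ b ^ 2 * y t j ≤ β j) := by
    intro t
    induction t with
    | zero =>
      exact ⟨fun i => ratio_init hb0 (hαb i) (hx0 i), fun j => ratio_init hb0 (hβb j) (hy0 j)⟩
    | succ t ih =>
      have hx : ∀ i, b ^ 2 * α i ≤ x (t + 1) i ∧ b ^ 2 * x (t + 1) i ≤ α i := by
        intro i
        rw [hxrec t i]
        exact ratio_step _ (hrowdeg i) (b ^ 2) (α i) hb2 (hα i) β (y t) hβ ih.2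
      refine ⟨hx, fun j => ?_⟩
      rw [hyrec t j]
      simp only [mul_comm (α _) (β j)]
      exact ratio_step _ (hcoldeg j) (b ^ 2) (β j) hb2 (hβ j) α (x (t + 1)) hα hx
  exact ⟨fun t i => (ratio_bounds hb0 (hαb i) ((key t).1 i)).1,
    fun t j => (ratio_bounds hb0 (hβb j) ((key t).2 j)).1,
    fun t i => (ratio_bounds hb0 (hαb i) ((key t).1 i)).2,
    fun t j => (ratio_bounds hb0 (hβb j) ((key t).2 j)).2⟩
end

section
/- Under the VLS setup, fix a time t and suppose 0 < b < 1, b ≤ α_i, β_j ≤ 1/b for all i, j, and b³ ≤ x_{i,t}, y_{j,t} ≤ 1/b³ for all i, j; let G have maximum degree Δ and every vertex have at least one neighbor. Define the n×n matrix P by P_{ik} = Σ_{j : j∼i and j∼k} (y_{j,t}² / Σ_{l∼i} y_{l,t}²) · (α_k x_{k,t} / Σ_{m∼j} α_m x_{m,t}). Then: (a) P is row-stochastic (entries nonnegative, each row sums to 1); (b) u_{t+1} = P u_t, where u_{s} = (x_{i,s}/α_i)_{i∈[n]} and x_{·,t+1}, y_{·,t+1} are given by one VLS step; (c) P_{ik}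 > 0 if and only if rows i and k have a common neighboring column in G (i.e. the support of P equals the support of A Aᵀ, A being the biadjacency matrix of G); and (d) every nonzero entry of P is at least b²⁰/Δ². -/
/-!
`P` is the composition of two averaging steps: from row `i` to a column `j ∼ i` with weight
`y_j² / ∑_{l ∼ i} y_l²`, then from `j` to a row `k ∼ j` with weight
`α_k x_k / ∑_{m ∼ j} α_m x_m`. Exchanging the two sums (`sum_double_step`) writes `P v` as the
iterated average. Each family of weights sums to `1`, which gives stochasticity.
For `v = x / α`, the inner average is `∑ x_m² / ∑ α_m x_m = β_j / y_j` by the recursion that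
produced `y_t` from `x_t`, and the outer average becomes
`∑_{j ∼ i} β_j y_j / ∑_{j ∼ i} y_j² = x_{i,t+1} / α_i`.
All weights are positive, hence the support statement. The quantities being normalized lie in
`[b⁶, b⁻⁶]` and `[b⁴, b⁻⁴]`, so the weights are at least `b¹² / Δ` and `b⁸ / Δ`
(`share_lower_bound`), and a single common neighbor already contributes `b²⁰ / Δ²`.
-/

/-- A normalized weight `f a / ∑ f` over at most `Δ` terms that all lie in `[c, 1/c]` is at
least `c² / Δ`. -/
lemma share_lower_bound {ι : Type*} (s : Finset ι) (f : ι → ℝ) (c : ℝ) (hc : 0 < c) (Δ : ℕ)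
    (hcard : s.card ≤ Δ) (hf : ∀ i ∈ s, c ≤ f i ∧ f i ≤ 1 / c) (a : ι) (ha : a ∈ s) :
    c ^ 2 / (Δ : ℝ) ≤ f a / ∑ i ∈ s, f i := by
  have hpos : 0 < ∑ i ∈ s, f i :=
    Finset.sum_pos (fun i hi => hc.trans_le (hf i hi).1) ⟨a, ha⟩
  have hle : ∑ i ∈ s, f i ≤ (Δ : ℝ) * (1 / c) := by
    calc ∑ i ∈ s, f i ≤ s.card • (1 / c) := Finset.sum_le_card_nsmul _ _ _ fun i hi => (hf i hi).2
      _ = (s.card : ℝ) * (1 / c) := by rw [nsmul_eq_mul]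
      _ ≤ (Δ : ℝ) * (1 / c) := by gcongr
  have hΔ : (0 : ℝ) < Δ := by
    have : 0 < Δ := (Finset.card_pos.2 ⟨a, ha⟩).trans_le hcard
    exact_mod_cast this
  calc c ^ 2 / (Δ : ℝ) = c / ((Δ : ℝ) * (1 / c)) := by field_simp
    _ ≤ f a / ∑ i ∈ s, f i := by
      have hca := (hf a ha).1
      have hfa := hc.le.trans hca
      gcongr

/-- Applying the two-step kernel `∑_{j ∼ i, j ∼ k} w j * q j k` to `v` averages `v` over the
rows adjacent to `j`, then averages over the columns `j` adjacent to `i`. -/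
lemma sum_double_step {n : ℕ} (Adj : Fin n → Fin n → Prop) [DecidableRel Adj]
    (w : Fin n → ℝ) (q : Fin n → Fin n → ℝ) (v : Fin n → ℝ) (i : Fin n) :
    ∑ k, (∑ j ∈ Finset.univ.filter fun j => Adj i j ∧ Adj k j, w j * q j k) * v k =
      ∑ j ∈ Finset.univ.filter fun j => Adj i j,
        w j * ∑ k ∈ Finset.univ.filter fun k => Adj k j, q j k * v k := by
  simp only [Finset.sum_mul, Finset.mul_sum]
  rw [Finset.sum_comm' (t' := Finset.univ.filter fun j => Adj i j)
    (s' := fun j => Finset.univ.filter fun k => Adj k j)]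
  · simp only [mul_assoc]
  · intro k j
    simp [and_comm]

/-- The combined VLS double-step matrix `P` (defined from the iterates `x t, y t`) is
row-stochastic, maps `u t = (x t i / α i)` to `u (t+1)`, has the same support as `A * Aᵀ`
(`A` the biadjacency matrix, i.e. `P i k > 0` iff rows `i` and `k` have a common
neighboring column), and all of its nonzero entries are at least `b²⁰ / Δ²`. -/
theorem stmt_3 (n : ℕ) (hn : 1 ≤ n) (Adj : Fin n → Fin n → Prop) [DecidableRel Adj]
    (Δ : ℕ)
    (hrowdeg : ∀ i : Fin n, (Finset.univ.filter fun j => Adj i j).Nonempty)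
    (hcoldeg : ∀ j : Fin n, (Finset.univ.filter fun i => Adj i j).Nonempty)
    (hrowΔ : ∀ i : Fin n, (Finset.univ.filter fun j => Adj i j).card ≤ Δ)
    (hcolΔ : ∀ j : Fin n, (Finset.univ.filter fun i => Adj i j).card ≤ Δ)
    (b : ℝ) (hb0 : 0 < b) (hb1 : b < 1)
    (α β : Fin n → ℝ)
    (hαb : ∀ i, b ≤ α i ∧ α i ≤ 1 / b) (hβb : ∀ j, b ≤ β j ∧ β j ≤ 1 / b)
    (x y : ℕ → Fin n → ℝ)
    -- the VLS closed-form recursion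
    (hxrec : ∀ s : ℕ, ∀ i : Fin n,
      x (s + 1) i =
        (∑ j ∈ Finset.univ.filter fun j => Adj i j, (α i * β j) * y s j) /
          (∑ j ∈ Finset.univ.filter fun j => Adj i j, (y s j) ^ 2))
    (hyrec : ∀ s : ℕ, ∀ j : Fin n,
      y (s + 1) j =
        (∑ i ∈ Finset.univ.filter fun i => Adj i j, (α i * β j) * x (s + 1) i) /
          (∑ i ∈ Finset.univ.filter fun i => Adj i j, (x (s + 1) i) ^ 2))
    -- a fixed time `t ≥ 1` at which the iterates satisfy the a priori bounds
    (t : ℕ) (ht : 1 ≤ t)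
    (hxb : ∀ i, b ^ 3 ≤ x t i ∧ x t i ≤ 1 / b ^ 3)
    (hyb : ∀ j, b ^ 3 ≤ y t j ∧ y t j ≤ 1 / b ^ 3)
    -- the matrix `P`
    (P : Fin n → Fin n → ℝ)
    (hP : ∀ i k : Fin n,
      P i k = ∑ j ∈ Finset.univ.filter fun j => Adj i j ∧ Adj k j,
        ((y t j) ^ 2 / ∑ l ∈ Finset.univ.filter fun l => Adj i l, (y t l) ^ 2) *
          ((α k * x t k) / ∑ m ∈ Finset.univ.filter fun m => Adj m j, α m * x t m)) :
    -- (a) `P` is row-stochastic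
    (∀ i k, 0 ≤ P i k) ∧ (∀ i, ∑ k, P i k = 1) ∧
    -- (b) `u (t+1) = P * u t`
    (∀ i, x (t + 1) i / α i = ∑ k, P i k * (x t k / α k)) ∧
    -- (c) the support of `P` is the common-neighbor relation (support of `A * Aᵀ`)
    (∀ i k, 0 < P i k ↔ ∃ j, Adj i j ∧ Adj k j) ∧
    -- (d) every nonzero entry of `P` is at least `b²⁰ / Δ²`
    (∀ i k, P i k ≠ 0 → b ^ 20 / (Δ : ℝ) ^ 2 ≤ P i k) := by
  have hα : ∀ i, 0 < α i := fun i => hb0.trans_le (hαb i).1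
  have hx : ∀ i, 0 < x t i := fun i => (pow_pos hb0 3).trans_le (hxb i).1
  have hy : ∀ j, 0 < y t j := fun j => (pow_pos hb0 3).trans_le (hyb j).1
  have hY : ∀ i, 0 < ∑ l ∈ Finset.univ.filter fun l => Adj i l, (y t l) ^ 2 := fun i =>
    Finset.sum_pos (fun l _ => pow_pos (hy l) 2) (hrowdeg i)
  have hS : ∀ j, 0 < ∑ m ∈ Finset.univ.filter fun m => Adj m j, α m * x t m := fun j =>
    Finset.sum_pos (fun m _ => mul_pos (hα m) (hx m)) (hcoldeg j)
  have hX : ∀ j, 0 < ∑ m ∈ Finset.univ.filter fun m => Adj m j, (x t m) ^ 2 := fun j =>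
    Finset.sum_pos (fun m _ => pow_pos (hx m) 2) (hcoldeg j)
  have hterm : ∀ i k j,
      0 < ((y t j) ^ 2 / ∑ l ∈ Finset.univ.filter fun l => Adj i l, (y t l) ^ 2) *
          ((α k * x t k) / ∑ m ∈ Finset.univ.filter fun m => Adj m j, α m * x t m) :=
    fun i k j => mul_pos (div_pos (pow_pos (hy j) 2) (hY i))
      (div_pos (mul_pos (hα k) (hx k)) (hS j))
  have hnonneg : ∀ i k, 0 ≤ P i k := fun i k => by
    rw [hP]
    exact Finset.sum_nonneg fun j _ => (hterm i k j).le
  have hmulVec := fun (i : Fin n) (v : Fin n → ℝ) => sum_double_step Adj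
    (fun j => (y t j) ^ 2 / ∑ l ∈ Finset.univ.filter fun l => Adj i l, (y t l) ^ 2)
    (fun j k => (α k * x t k) / ∑ m ∈ Finset.univ.filter fun m => Adj m j, α m * x t m) v i
  simp only [← hP] at hmulVec
  have hsupp : ∀ i k, 0 < P i k ↔ ∃ j, Adj i j ∧ Adj k j := by
    intro i k
    constructor
    · intro h
      rw [hP] at h
      obtain ⟨j, hj, -⟩ := Finset.exists_ne_zero_of_sum_ne_zero h.ne'
      exact ⟨j, by simpa using hj⟩
    · rintro ⟨j, hj⟩
      rw [hP]
      exact Finset.sum_pos (fun j _ => hterm i k j) ⟨j, by simpa using hj⟩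
  refine ⟨hnonneg, ?_, ?_, hsupp, ?_⟩
  · intro i
    have h := hmulVec i (fun _ => 1)
    simp only [mul_one, ← Finset.sum_div] at h
    rw [h, Finset.sum_congr rfl fun j _ => by rw [div_self (hS j).ne', mul_one],
      ← Finset.sum_div, div_self (hY i).ne']
  · intro i
    -- `y t` comes from `x t` by the recursion because `t ≥ 1`.
    have hyt : ∀ j, y t j * ∑ m ∈ Finset.univ.filter fun m => Adj m j, (x t m) ^ 2 =
        β j * ∑ m ∈ Finset.univ.filter fun m => Adj m j, α m * x t m := by
      intro j
      obtain ⟨s, rfl⟩ := Nat.exists_eq_add_of_le' ht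
      rw [hyrec s j, div_mul_cancel₀ _ (hX j).ne', Finset.mul_sum]
      exact Finset.sum_congr rfl fun m _ => by ring
    have hinner : ∀ j, ∑ k ∈ Finset.univ.filter fun k => Adj k j,
        (α k * x t k) / (∑ m ∈ Finset.univ.filter fun m => Adj m j, α m * x t m) *
          (x t k / α k) = β j / y t j := by
      intro j
      have hsq : ∀ k, (α k * x t k) /
          (∑ m ∈ Finset.univ.filter fun m => Adj m j, α m * x t m) * (x t k / α k) =
          (x t k) ^ 2 / ∑ m ∈ Finset.univ.filter fun m => Adj m j, α m * x t m := by
        intro k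
        have h1 := (hα k).ne'
        have h2 := (hS j).ne'
        field_simp
      rw [Finset.sum_congr rfl fun k _ => hsq k, ← Finset.sum_div,
        div_eq_div_iff (hS j).ne' (hy j).ne', mul_comm, hyt j]
    rw [hmulVec i (fun k => x t k / α k), hxrec t i, div_right_comm, Finset.sum_div,
      Finset.sum_div]
    refine Finset.sum_congr rfl fun j _ => ?_
    rw [hinner j]
    have h1 := (hα i).ne'
    have h2 := (hY i).ne'
    have h3 := (hy j).ne'
    field_simp
  · intro i k hne
    obtain ⟨j, hij, hkj⟩ := (hsupp i k).1 (lt_of_le_of_ne (hnonneg i k) hne.symm)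
    have hrow := share_lower_bound (Finset.univ.filter fun l => Adj i l)
      (fun l => (y t l) ^ 2) (b ^ 6) (pow_pos hb0 6) Δ (hrowΔ i) (fun l _ => by
        have hl := hyb l
        have hl0 := hy l
        constructor
        · calc b ^ 6 = (b ^ 3) ^ 2 := by ring
            _ ≤ (y t l) ^ 2 := by gcongr; exact hl.1
        · calc (y t l) ^ 2 ≤ (1 / b ^ 3) ^ 2 := by gcongr; exact hl.2
            _ = 1 / b ^ 6 := by rw [div_pow]; ring) j (by simpa using hij)
    have hcol := share_lower_bound (Finset.univ.filter fun m => Adj m j)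
      (fun m => α m * x t m) (b ^ 4) (pow_pos hb0 4) Δ (hcolΔ j) (fun m _ => by
        constructor
        · calc b ^ 4 = b * b ^ 3 := by ring
            _ ≤ α m * x t m :=
              mul_le_mul (hαb m).1 (hxb m).1 (pow_pos hb0 3).le (hα m).le
        · calc α m * x t m ≤ 1 / b * (1 / b ^ 3) :=
              mul_le_mul (hαb m).2 (hxb m).2 (hx m).le (one_div_pos.2 hb0).le
            _ = 1 / b ^ 4 := by rw [div_mul_div_comm]; ring) k (by simpa using hkj)
    rw [hP]
    calc b ^ 20 / (Δ : ℝ) ^ 2 = (b ^ 6) ^ 2 / (Δ : ℝ) * ((b ^ 4) ^ 2 / (Δ : ℝ)) := by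
          rw [div_mul_div_comm]; ring
      _ ≤ _ := mul_le_mul hrow hcol (by positivity) (div_pos (pow_pos (hy j) 2) (hY i)).le
      _ ≤ _ := Finset.single_le_sum (f := fun j =>
          ((y t j) ^ 2 / ∑ l ∈ Finset.univ.filter fun l => Adj i l, (y t l) ^ 2) *
          ((α k * x t k) / ∑ m ∈ Finset.univ.filter fun m => Adj m j, α m * x t m))
          (fun j _ => (hterm i k j).le) (by simpa using ⟨hij, hkj⟩)
end

section
/- Let n ≥ 2 be even, let 0 < b < 1, and define α, x ∈ ℝⁿ by α_i = b and x_i = 1/b for 1 ≤ i ≤ n/2, and α_i = 1/b and x_i = b for n/2 < i ≤ n. Then the principal-angle (subspace) distance satisfies d(x, α) := 1 − (⟨x, α⟩ / (‖x‖·‖α‖))² = 1 − 4b⁴/(1 + b⁴)². Moreover, this quantity is strictly greater than 1/2 whenever b⁴ < 3 − 2√2. -/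
/-!
With `n = 2m`, each coordinate product `x i * α i` is `1`, so `⟨x, α⟩ = 2m`, while both squared
norms equal `m (b² + b⁻²)`; hence the cosine is `2 / (b² + b⁻²) = 2b² / (1 + b⁴)`. With `t = b⁴`,
the inequality `4t / (1 + t)² < 1/2` amounts to `t² - 6t + 1 > 0`, which holds for `t` below the
smaller root `3 - 2√2`.
-/

/-- The sum of a function on `Fin (m + m)` equal to `p` on the first half of the indices
and to `q` on the second half. -/
lemma sum_halves (m : ℕ) (f : Fin (m + m) → ℝ) (p q : ℝ)
    (hf : ∀ i, f i = if (i : ℕ) < m then p else q) : ∑ i, f i = m * (p + q) := by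
  rw [Fin.sum_univ_add]
  simp [hf]
  ring


/-- The principal-angle (subspace) distance between the vector `α` (equal to `b` on the
first half of the coordinates and `1/b` on the second half) and the vector `x` (equal to
`1/b` on the first half and `b` on the second half) equals `1 − 4b⁴/(1 + b⁴)²`, which is
strictly greater than `1/2` whenever `b⁴ < 3 − 2√2`. -/
theorem stmt_9 (n : ℕ) (hn : 2 ≤ n) (hev : Even n) (b : ℝ) (hb0 : 0 < b) (hb1 : b < 1)
    (α x : Fin n → ℝ)
    (hα : ∀ i : Fin n, α i = if (i : ℕ) < n / 2 then b else 1 / b)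
    (hx : ∀ i : Fin n, x i = if (i : ℕ) < n / 2 then 1 / b else b) :
    1 - ((∑ i, x i * α i) /
        (Real.sqrt (∑ i, (x i) ^ 2) * Real.sqrt (∑ i, (α i) ^ 2))) ^ 2
      = 1 - 4 * b ^ 4 / (1 + b ^ 4) ^ 2 ∧
    (b ^ 4 < 3 - 2 * Real.sqrt 2 → 1 / 2 < 1 - 4 * b ^ 4 / (1 + b ^ 4) ^ 2) := by
  obtain ⟨m, rfl⟩ := hev
  have hm : (0 : ℝ) < m := by
    have : 0 < m := by omega
    exact_mod_cast this
  have hhalf : (m + m) / 2 = m := by omega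
  rw [hhalf] at hα hx
  have hb : b ≠ 0 := hb0.ne'
  have h1 : ∑ i, x i * α i = 2 * m := by
    rw [sum_halves m (fun i => x i * α i) 1 1]
    · ring
    · intro i
      rw [hα, hx]
      split_ifs <;> field_simp
  have h2 : ∑ i, (x i) ^ 2 = m * ((1 / b) ^ 2 + b ^ 2) := by
    apply sum_halves
    intro i
    rw [hx]
    split_ifs <;> rfl
  have h3 : ∑ i, (α i) ^ 2 = m * ((1 / b) ^ 2 + b ^ 2) := by
    rw [add_comm ((1 / b) ^ 2)]
    apply sum_halves
    intro i
    rw [hα]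
    split_ifs <;> rfl
  constructor
  · rw [h1, h2, h3, Real.mul_self_sqrt (by positivity)]
    field_simp
    ring
  · intro h
    have hs : Real.sqrt 2 ^ 2 = 2 := Real.sq_sqrt (by norm_num)
    have hs0 : 0 ≤ Real.sqrt 2 := Real.sqrt_nonneg 2
    -- `t² - 6t + 1` has roots `3 ± 2√2`, and `t = b⁴` lies below the smaller one.
    have hq : 0 < (3 - 2 * Real.sqrt 2 - b ^ 4) * (3 + 2 * Real.sqrt 2 - b ^ 4) :=
      mul_pos (by linarith) (by linarith)
    have hlt : 4 * b ^ 4 / (1 + b ^ 4) ^ 2 < 1 / 2 := by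
      rw [div_lt_iff₀ (by positivity)]
      nlinarith
    linarith
end

section
/- Under the ELS setup, fix a time t and suppose 0 < b < 1, b ≤ α_i, β_j ≤ 1/b for all i, j, b³ ≤ x_{i→j,t}, y_{j→i,t} ≤ 1/b³ for all edges, and G has maximum degree Δ and minimum degree at least 2. Let E_R denote the set of directed edges (i→j) from rows to columns, and let u_t = (x_{i→j,t}/α_i)_{(i→j)∈E_R}. Then there exists a row-stochastic E_R×E_R matrix P such that u_{t+1} = P u_t, the entry P[(i→j),(k→k')] is nonzero if and only if k'∼i, k' ≠ j, k∼k' and k ≠ i, and every nonzero entry of P is at least b²⁰/Δ². -/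
/-!
Write `N(i)`, `N(k')` for neighbourhoods. Dividing the `x`-update by `α i` gives
`x_{i→j,t+1}/α i = ∑_{k'} w_{k'} · (β_{k'} / y_{k'→i,t})`, an average over `k' ∈ N(i) \ {j}` with
weights `w_{k'} = y_{k'→i,t}² / ∑_m y_{m→i,t}²`. Since `t ≥ 1`, the `y`-update at time `t` turns
each reciprocal ratio into another average, `β_{k'} / y_{k'→i,t} = ∑_k q_k · (x_{k→k',t} / α k)`
over `k ∈ N(k') \ {i}`, with weights `q_k = α k x_{k→k',t} / ∑_l α l x_{l→k',t}`.
So `P[(i→j),(k→k')] = w_{k'} q_k` on the support. The bounds `b³ ≤ x, y ≤ b⁻³` and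
`b ≤ α ≤ b⁻¹` give `w ≥ b¹²/Δ` and `q ≥ b⁸/Δ`, whose product is `b²⁰/Δ²`.
-/

/-- Summing over the directed edges `(k→k')` that lie in the support of row `(i→j)` of `P` is the
same as summing over `k' ∈ N(i) \ {j}` and then over `k ∈ N(k') \ {i}`. -/
lemma sum_edges_eq {n : ℕ} (Adj : Fin n → Fin n → Prop) [DecidableRel Adj] (i j : Fin n)
    (F : Fin n → Fin n → ℝ) :
    ∑ f : {p : Fin n × Fin n // Adj p.1 p.2},
        (if Adj i f.1.2 ∧ f.1.2 ≠ j ∧ f.1.1 ≠ i then F f.1.1 f.1.2 else 0) =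
      ∑ k' ∈ (Finset.univ.filter fun k => Adj i k).erase j,
        ∑ k ∈ (Finset.univ.filter fun k => Adj k k').erase i, F k k' := by
  have h1 : ∑ f : {p : Fin n × Fin n // Adj p.1 p.2},
        (if Adj i f.1.2 ∧ f.1.2 ≠ j ∧ f.1.1 ≠ i then F f.1.1 f.1.2 else 0) =
      ∑ p ∈ Finset.univ.filter (fun p : Fin n × Fin n => Adj p.1 p.2),
        (if Adj i p.2 ∧ p.2 ≠ j ∧ p.1 ≠ i then F p.1 p.2 else 0) :=
    (Finset.sum_subtype _ (by simp)
      (fun p : Fin n × Fin n => if Adj i p.2 ∧ p.2 ≠ j ∧ p.1 ≠ i then F p.1 p.2 else 0)).symm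
  rw [h1, Finset.sum_filter, Fintype.sum_prod_type_right]
  have hA : (Finset.univ.filter fun k => Adj i k).erase j
      = Finset.univ.filter fun k => Adj i k ∧ k ≠ j := by
    ext k; simp [and_comm]
  rw [hA, Finset.sum_filter]
  refine Finset.sum_congr rfl fun k' _ => ?_
  have hB : (Finset.univ.filter fun k => Adj k k').erase i
      = Finset.univ.filter fun k => Adj k k' ∧ k ≠ i := by
    ext k; simp [and_comm]
  rw [hB, Finset.sum_filter]
  by_cases h : Adj i k' ∧ k' ≠ j
  · rw [if_pos h]
    refine Finset.sum_congr rfl fun k _ => ?_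
    simp only [h.1, h.2, ne_eq, not_false_eq_true, true_and]
    by_cases h3 : Adj k k' <;> simp [h3]
  · rw [if_neg h]
    refine Finset.sum_eq_zero fun k _ => ?_
    have : ¬ (Adj i k' ∧ k' ≠ j ∧ k ≠ i) := fun h' => h ⟨h'.1, h'.2.1⟩
    simp [this]

/-- A weight `g a / ∑ g` is at least `m² / D` when all values of `g` lie in `[m, 1/m]` and there
are at most `D` of them. -/
lemma weight_lower_bound {ι : Type*} (s : Finset ι) (g : ι → ℝ) (m : ℝ) (hm : 0 < m) (D : ℕ)
    (hcard : s.card ≤ D) (hg : ∀ a ∈ s, m ≤ g a ∧ g a ≤ 1 / m) {a : ι} (ha : a ∈ s) :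
    m ^ 2 / (D : ℝ) ≤ g a / ∑ c ∈ s, g c := by
  have hpos : 0 < ∑ c ∈ s, g c :=
    Finset.sum_pos (fun c hc => hm.trans_le (hg c hc).1) ⟨a, ha⟩
  have hle : ∑ c ∈ s, g c ≤ D * (1 / m) := by
    calc ∑ c ∈ s, g c ≤ s.card • (1 / m) := Finset.sum_le_card_nsmul _ _ _ fun c hc => (hg c hc).2
      _ = (s.card : ℝ) * (1 / m) := by rw [nsmul_eq_mul]
      _ ≤ D * (1 / m) := by gcongr
  have hD : (0 : ℝ) < D := by
    have : 0 < s.card := Finset.card_pos.2 ⟨a, ha⟩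
    exact_mod_cast this.trans_le hcard
  calc m ^ 2 / (D : ℝ) = m / (D * (1 / m)) := by field_simp
    _ ≤ g a / ∑ c ∈ s, g c := div_le_div₀ (hm.le.trans (hg a ha).1) (hg a ha).1 hpos hle

lemma erase_nonempty {ι : Type*} [DecidableEq ι] (s : Finset ι) (a : ι) (h : 2 ≤ s.card) :
    (s.erase a).Nonempty := by
  have := Finset.pred_card_le_card_erase (s := s) (a := a)
  exact Finset.card_pos.1 (by omega)


/-- The combined ELS double-step is given by a row-stochastic matrix `P` indexed by the
directed row-to-column edges `E_R = {(i,j) : i ∼ j}` of `G`: it maps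
`u_t = (x_{i→j,t}/α i)` to `u_{t+1}`, the entry `P[(i→j),(k→k')]` is nonzero iff
`k' ∼ i`, `k' ≠ j`, `k ∼ k'` and `k ≠ i`, and every nonzero entry of `P` is at least
`b²⁰ / Δ²`. Here `x t i j = x_{i→j,t}` and `y t j i = y_{j→i,t}`. -/
theorem stmt_12 (n : ℕ) (hn : 1 ≤ n) (Adj : Fin n → Fin n → Prop) [DecidableRel Adj]
    (Δ : ℕ)
    (hrowdeg : ∀ i : Fin n, 2 ≤ (Finset.univ.filter fun j => Adj i j).card)
    (hcoldeg : ∀ j : Fin n, 2 ≤ (Finset.univ.filter fun i => Adj i j).card)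
    (hrowΔ : ∀ i : Fin n, (Finset.univ.filter fun j => Adj i j).card ≤ Δ)
    (hcolΔ : ∀ j : Fin n, (Finset.univ.filter fun i => Adj i j).card ≤ Δ)
    (b : ℝ) (hb0 : 0 < b) (hb1 : b < 1)
    (α β : Fin n → ℝ)
    (hαb : ∀ i, b ≤ α i ∧ α i ≤ 1 / b) (hβb : ∀ j, b ≤ β j ∧ β j ≤ 1 / b)
    (x y : ℕ → Fin n → Fin n → ℝ)
    -- the ELS closed-form recursion
    (hxrec : ∀ s : ℕ, ∀ i j : Fin n, Adj i j →
      x (s + 1) i j =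
        (∑ k ∈ (Finset.univ.filter fun k => Adj i k).erase j, (α i * β k) * y s k i) /
          (∑ k ∈ (Finset.univ.filter fun k => Adj i k).erase j, (y s k i) ^ 2))
    (hyrec : ∀ s : ℕ, ∀ i j : Fin n, Adj i j →
      y (s + 1) j i =
        (∑ k ∈ (Finset.univ.filter fun k => Adj k j).erase i, (α k * β j) * x (s + 1) k j) /
          (∑ k ∈ (Finset.univ.filter fun k => Adj k j).erase i, (x (s + 1) k j) ^ 2))
    -- a fixed time `t ≥ 1` at which the edge variables satisfy the a priori bounds
    (t : ℕ) (ht : 1 ≤ t)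
    (hxb : ∀ i j : Fin n, Adj i j → b ^ 3 ≤ x t i j ∧ x t i j ≤ 1 / b ^ 3)
    (hyb : ∀ i j : Fin n, Adj i j → b ^ 3 ≤ y t j i ∧ y t j i ≤ 1 / b ^ 3) :
    ∃ P : {p : Fin n × Fin n // Adj p.1 p.2} → {p : Fin n × Fin n // Adj p.1 p.2} → ℝ,
      -- `P` is row-stochastic
      (∀ e f, 0 ≤ P e f) ∧
      (∀ e, ∑ f, P e f = 1) ∧
      -- `u_{t+1} = P u_t`
      (∀ e : {p : Fin n × Fin n // Adj p.1 p.2},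
        x (t + 1) e.1.1 e.1.2 / α e.1.1 =
          ∑ f : {p : Fin n × Fin n // Adj p.1 p.2}, P e f * (x t f.1.1 f.1.2 / α f.1.1)) ∧
      -- support of `P`: `P[(i→j),(k→k')] ≠ 0` iff `k' ∼ i`, `k' ≠ j`, `k ∼ k'`, `k ≠ i`
      (∀ e f : {p : Fin n × Fin n // Adj p.1 p.2},
        P e f ≠ 0 ↔
          Adj e.1.1 f.1.2 ∧ f.1.2 ≠ e.1.2 ∧ Adj f.1.1 f.1.2 ∧ f.1.1 ≠ e.1.1) ∧
      -- every nonzero entry of `P` is at least `b²⁰ / Δ²`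
      (∀ e f, P e f ≠ 0 → b ^ 20 / (Δ : ℝ) ^ 2 ≤ P e f) := by
  classical
  obtain ⟨s, rfl⟩ : ∃ s, t = s + 1 := ⟨t - 1, by omega⟩
  set t := s + 1 with ht_def
  have hb3 : 0 < b ^ 3 := by positivity
  have hα : ∀ i, 0 < α i := fun i => hb0.trans_le (hαb i).1
  have hβ : ∀ i, 0 < β i := fun i => hb0.trans_le (hβb i).1
  have hx : ∀ i j, Adj i j → 0 < x t i j := fun i j h => hb3.trans_le (hxb i j h).1
  have hy : ∀ i j, Adj i j → 0 < y t j i := fun i j h => hb3.trans_le (hyb i j h).1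
  let A : Fin n → Fin n → Finset (Fin n) := fun i j => (Finset.univ.filter fun k => Adj i k).erase j
  let B : Fin n → Fin n → Finset (Fin n) := fun i k' =>
    (Finset.univ.filter fun k => Adj k k').erase i
  have memA : ∀ {i j k}, k ∈ A i j ↔ k ≠ j ∧ Adj i k := by intro i j k; simp [A]
  have memB : ∀ {i k' k}, k ∈ B i k' ↔ k ≠ i ∧ Adj k k' := by intro i k' k; simp [B]
  have cardA : ∀ i j, (A i j).card ≤ Δ := fun i j => (Finset.card_erase_le).trans (hrowΔ i)
  have cardB : ∀ i k', (B i k').card ≤ Δ := fun i k' => (Finset.card_erase_le).trans (hcolΔ k')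
  let SY : Fin n → Fin n → ℝ := fun i j => ∑ k ∈ A i j, y t k i ^ 2
  let SX : Fin n → Fin n → ℝ := fun i k' => ∑ k ∈ B i k', α k * x t k k'
  have hSY : ∀ i j, 0 < SY i j := fun i j =>
    Finset.sum_pos (fun k hk => pow_pos (hy _ _ (memA.1 hk).2) 2) (erase_nonempty _ _ (hrowdeg i))
  have hSX : ∀ i k', 0 < SX i k' := fun i k' =>
    Finset.sum_pos (fun k hk => mul_pos (hα k) (hx _ _ (memB.1 hk).2))
      (erase_nonempty _ _ (hcoldeg k'))
  -- the entry `w_{k'} * q_k` of row `(i→j)` at `(k→k')`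
  let W : Fin n → Fin n → Fin n → Fin n → ℝ := fun i j k k' =>
    y t k' i ^ 2 / SY i j * (α k * x t k k' / SX i k')
  have hW : ∀ i j k k', Adj i k' → Adj k k' → 0 < W i j k k' := fun i j k k' h1 h2 =>
    mul_pos (div_pos (pow_pos (hy _ _ h1) 2) (hSY i j))
      (div_pos (mul_pos (hα k) (hx _ _ h2)) (hSX i k'))
  have hwsum : ∀ i j, ∑ k' ∈ A i j, y t k' i ^ 2 / SY i j = 1 := fun i j => by
    rw [← Finset.sum_div]; exact div_self (hSY i j).ne'
  have hqsum : ∀ i k', ∑ k ∈ B i k', α k * x t k k' / SX i k' = 1 := fun i k' => by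
    rw [← Finset.sum_div]; exact div_self (hSX i k').ne'
  -- the `y`-update, written as an average of the ratios `x / α`
  have hystep : ∀ i k', Adj i k' →
      ∑ k ∈ B i k', α k * x t k k' / SX i k' * (x t k k' / α k) = β k' / y t k' i := by
    intro i k' h
    have e1 : ∑ k ∈ B i k', α k * x t k k' / SX i k' * (x t k k' / α k)
        = (∑ k ∈ B i k', x t k k' ^ 2) / SX i k' := by
      rw [Finset.sum_div]
      refine Finset.sum_congr rfl fun k _ => ?_
      have := (hα k).ne'
      have := (hSX i k').ne'
      field_simp
    have e2 : y t k' i = β k' * SX i k' / ∑ k ∈ B i k', x t k k' ^ 2 := by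
      rw [ht_def, hyrec s i k' h, ← ht_def]
      congr 1
      rw [Finset.mul_sum]
      exact Finset.sum_congr rfl fun k _ => by ring
    have hQ : 0 < ∑ k ∈ B i k', x t k k' ^ 2 :=
      Finset.sum_pos (fun k hk => pow_pos (hx _ _ (memB.1 hk).2) 2)
        (erase_nonempty _ _ (hcoldeg k'))
    rw [e1, e2]
    have := (hβ k').ne'
    have := (hSX i k').ne'
    field_simp
  refine ⟨fun e f => if Adj e.1.1 f.1.2 ∧ f.1.2 ≠ e.1.2 ∧ f.1.1 ≠ e.1.1 then
    W e.1.1 e.1.2 f.1.1 f.1.2 else 0, ?_, ?_, ?_, ?_, ?_⟩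
  · intro e f
    dsimp only
    split_ifs with h
    · exact (hW _ _ _ _ h.1 f.2).le
    · exact le_rfl
  · rintro ⟨⟨i, j⟩, hij⟩
    refine (sum_edges_eq Adj i j (W i j)).trans ?_
    rw [← hwsum i j]
    refine Finset.sum_congr rfl fun k' _ => ?_
    exact (Finset.mul_sum _ _ _).symm.trans (by rw [hqsum, mul_one])
  · rintro ⟨⟨i, j⟩, hij⟩
    simp only [ite_mul, zero_mul]
    refine Eq.trans ?_ (sum_edges_eq Adj i j fun k k' => W i j k k' * (x t k k' / α k)).symm
    have e1 : ∀ k' ∈ A i j, ∑ k ∈ B i k', W i j k k' * (x t k k' / α k)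
        = β k' * y t k' i / SY i j := by
      intro k' hk'
      have hne := (hy i k' (memA.1 hk').2).ne'
      have hs := (hSY i j).ne'
      calc ∑ k ∈ B i k', W i j k k' * (x t k k' / α k)
          = y t k' i ^ 2 / SY i j *
            ∑ k ∈ B i k', α k * x t k k' / SX i k' * (x t k k' / α k) := by
            rw [Finset.mul_sum]
            exact Finset.sum_congr rfl fun k _ => mul_assoc _ _ _
        _ = β k' * y t k' i / SY i j := by
            rw [hystep i k' (memA.1 hk').2]
            field_simp
    refine Eq.trans ?_ (Finset.sum_congr rfl e1).symm
    rw [← Finset.sum_div]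
    have e2 : x (t + 1) i j = α i * (∑ k' ∈ A i j, β k' * y t k' i) / SY i j := by
      rw [hxrec t i j hij]
      congr 1
      rw [Finset.mul_sum]
      exact Finset.sum_congr rfl fun k _ => mul_assoc _ _ _
    show x (t + 1) i j / α i = _
    rw [e2]
    have := (hα i).ne'
    field_simp
  · intro e f
    dsimp only
    constructor
    · intro h
      by_cases hc : Adj e.1.1 f.1.2 ∧ f.1.2 ≠ e.1.2 ∧ f.1.1 ≠ e.1.1
      · exact ⟨hc.1, hc.2.1, f.2, hc.2.2⟩
      · exact absurd (if_neg hc) h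
    · rintro ⟨h1, h2, h3, h4⟩
      rw [if_pos ⟨h1, h2, h4⟩]
      exact (hW _ _ _ _ h1 h3).ne'
  · intro e f
    dsimp only
    split_ifs with h
    · intro _
      have hw := weight_lower_bound (A e.1.1 e.1.2) (fun k => y t k e.1.1 ^ 2) (b ^ 6)
        (by positivity) Δ (cardA _ _) (fun k hk => by
          have hk2 := (memA.1 hk).2
          have hb := hyb _ _ hk2
          constructor
          · calc b ^ 6 = (b ^ 3) ^ 2 := by ring
              _ ≤ _ := pow_le_pow_left₀ hb3.le hb.1 2
          · calc y t k e.1.1 ^ 2 ≤ (1 / b ^ 3) ^ 2 := pow_le_pow_left₀ (hy _ _ hk2).le hb.2 2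
              _ = 1 / b ^ 6 := by rw [div_pow, one_pow, ← pow_mul]) (memA.2 ⟨h.2.1, h.1⟩)
      have hq := weight_lower_bound (B e.1.1 f.1.2) (fun k => α k * x t k f.1.2) (b ^ 4)
        (by positivity) Δ (cardB _ _) (fun k hk => by
          have hk2 := (memB.1 hk).2
          have hb := hxb _ _ hk2
          constructor
          · calc b ^ 4 = b * b ^ 3 := by ring
              _ ≤ _ := mul_le_mul (hαb k).1 hb.1 hb3.le (hα k).le
          · calc α k * x t k f.1.2 ≤ (1 / b) * (1 / b ^ 3) :=
                  mul_le_mul (hαb k).2 hb.2 (hx _ _ hk2).le (by positivity)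
              _ = 1 / b ^ 4 := by rw [div_mul_div_comm, one_mul, ← pow_succ'])
          (memB.2 ⟨h.2.2, f.2⟩)
      calc b ^ 20 / (Δ : ℝ) ^ 2 = (b ^ 6) ^ 2 / (Δ : ℝ) * ((b ^ 4) ^ 2 / (Δ : ℝ)) := by
            rw [div_mul_div_comm]; ring
        _ ≤ W e.1.1 e.1.2 f.1.1 f.1.2 :=
            mul_le_mul hw hq (by positivity) (le_trans (by positivity) hw)
    · intro h0
      exact absurd rfl h0
end
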